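/- Let n ≥ 1, let C ∈ M_n(ℝ) satisfy CᵀC = 1, and let r ∈ ℝⁿ. Put g = ι(C, r) ∈ M_{n+1}(ℝ). Then for all matrices ξ, η ∈ M_{n+1}(ℝ) whose (n+1)-st (last) row is zero, tr((gξ)ᵀ(gη)) = tr(ξᵀη). (This says that left translation by ι(C, r) preserves the Frobenius inner product on the tangent spaces of ι(SE(n)) ⊂ ℝ^{(n+1)²}; hence ι is an isometric imbedding of SE(n), with the left-invariant metric, into the Euclidean space ℝ^{(n+1)²}.) -/

import Mathlib

open Matrix

noncomputable section

/-- The imbedding `ι(C, r) = [[C, r], [0, 1]]` of `M_n(ℝ) × ℝⁿ` into `M_{n+1}(ℝ)`. -/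
def iotaSE (n : ℕ) (C : Matrix (Fin n) (Fin n) ℝ) (r : Fin n → ℝ) :
    Matrix (Fin (n + 1)) (Fin (n + 1)) ℝ :=
  Matrix.of fun a b =>
    if ha : (a : ℕ) < n then
      if hb : (b : ℕ) < n then C ⟨a, ha⟩ ⟨b, hb⟩ else r ⟨a, ha⟩
    else if (b : ℕ) < n then 0 else 1

section LastRow

variable {n : ℕ} {l m R : Type*} [NonUnitalNonAssocSemiring R]

lemma transpose_mul_eq_castSucc_add_vecMulVec_last (X : Matrix (Fin (n + 1)) l R)
    (Y : Matrix (Fin (n + 1)) m R) :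
    Xᵀ * Y = (X.submatrix Fin.castSucc id)ᵀ * Y.submatrix Fin.castSucc id +
      vecMulVec (X (Fin.last n)) (Y (Fin.last n)) := by
  ext a b
  simp [mul_apply, vecMulVec_apply, Fin.sum_univ_castSucc]

lemma transpose_mul_eq_castSucc_of_last_eq_zero {X : Matrix (Fin (n + 1)) l R}
    (hX : X (Fin.last n) = 0) (Y : Matrix (Fin (n + 1)) m R) :
    Xᵀ * Y = (X.submatrix Fin.castSucc id)ᵀ * Y.submatrix Fin.castSucc id := by
  rw [transpose_mul_eq_castSucc_add_vecMulVec_last, hX, zero_vecMulVec, add_zero]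

end LastRow

lemma transpose_mul_mul_mul_of_transpose_mul_self_eq_one {k l m p R : Type*} [Fintype k]
    [Fintype p] [DecidableEq p] [CommSemiring R] {C : Matrix k p R} (hC : Cᵀ * C = 1)
    (X : Matrix p l R) (Y : Matrix p m R) : (C * X)ᵀ * (C * Y) = Xᵀ * Y := by
  rw [transpose_mul, Matrix.mul_assoc, ← Matrix.mul_assoc Cᵀ, hC, Matrix.one_mul]

section IotaSE

variable {n : ℕ} (C : Matrix (Fin n) (Fin n) ℝ) (r : Fin n → ℝ) {l m : Type*}

lemma iotaSE_castSucc_castSucc (i j : Fin n) :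
    iotaSE n C r i.castSucc j.castSucc = C i j := by
  simp [iotaSE]

lemma iotaSE_castSucc_last (i : Fin n) : iotaSE n C r i.castSucc (Fin.last n) = r i := by
  simp [iotaSE]

lemma iotaSE_last_castSucc (j : Fin n) : iotaSE n C r (Fin.last n) j.castSucc = 0 := by
  simp [iotaSE]

lemma iotaSE_last_last : iotaSE n C r (Fin.last n) (Fin.last n) = 1 := by
  simp [iotaSE]

lemma iotaSE_mul_submatrix_castSucc (X : Matrix (Fin (n + 1)) l ℝ) :
    (iotaSE n C r * X).submatrix Fin.castSucc id =
      C * X.submatrix Fin.castSucc id + vecMulVec r (X (Fin.last n)) := by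
  ext i b
  simp [mul_apply, vecMulVec_apply, Fin.sum_univ_castSucc, iotaSE_castSucc_castSucc,
    iotaSE_castSucc_last]

lemma iotaSE_mul_last (X : Matrix (Fin (n + 1)) l ℝ) :
    (iotaSE n C r * X) (Fin.last n) = X (Fin.last n) := by
  ext b
  simp [mul_apply, Fin.sum_univ_castSucc, iotaSE_last_castSucc, iotaSE_last_last]

lemma iotaSE_mul_submatrix_castSucc_of_last_eq_zero {X : Matrix (Fin (n + 1)) l ℝ}
    (hX : X (Fin.last n) = 0) :
    (iotaSE n C r * X).submatrix Fin.castSucc id = C * X.submatrix Fin.castSucc id := by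
  have vecMulVec_r_zero : vecMulVec r (0 : l → ℝ) = 0 := Matrix.ext fun _ _ => mul_zero _
  rw [iotaSE_mul_submatrix_castSucc, hX, vecMulVec_r_zero, add_zero]

variable {C}

theorem statement14_general (hC : Cᵀ * C = 1) {ξ : Matrix (Fin (n + 1)) l ℝ}
    {η : Matrix (Fin (n + 1)) m ℝ} (hξ : ξ (Fin.last n) = 0) (hη : η (Fin.last n) = 0) :
    (iotaSE n C r * ξ)ᵀ * (iotaSE n C r * η) = ξᵀ * η := by
  have hgξ : (iotaSE n C r * ξ) (Fin.last n) = 0 := (iotaSE_mul_last C r ξ).trans hξ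
  calc (iotaSE n C r * ξ)ᵀ * (iotaSE n C r * η)
      = (C * ξ.submatrix Fin.castSucc id)ᵀ * (C * η.submatrix Fin.castSucc id) := by
        rw [transpose_mul_eq_castSucc_of_last_eq_zero hgξ,
          iotaSE_mul_submatrix_castSucc_of_last_eq_zero C r hξ,
          iotaSE_mul_submatrix_castSucc_of_last_eq_zero C r hη]
    _ = (ξ.submatrix Fin.castSucc id)ᵀ * η.submatrix Fin.castSucc id :=
        transpose_mul_mul_mul_of_transpose_mul_self_eq_one hC _ _
    _ = ξᵀ * η := (transpose_mul_eq_castSucc_of_last_eq_zero hξ η).symm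

end IotaSE

/-- Let `CᵀC = 1`, `r ∈ ℝⁿ` and `g = ι(C, r)`.  Then for all `ξ, η ∈ M_{n+1}(ℝ)` whose last
row is zero, `tr((gξ)ᵀ(gη)) = tr(ξᵀη)`: left translation by `ι(C, r)` preserves the Frobenius
inner product on the tangent spaces of `ι(SE(n)) ⊂ ℝ^{(n+1)²}`, hence `ι` is an isometric
imbedding of `SE(n)` into Euclidean space. -/
theorem statement14 (n : ℕ) (hn : 1 ≤ n)
    (C : Matrix (Fin n) (Fin n) ℝ) (hC : Cᵀ * C = 1) (r : Fin n → ℝ)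
    (ξ η : Matrix (Fin (n + 1)) (Fin (n + 1)) ℝ)
    (hξ : ∀ b, ξ (Fin.last n) b = 0) (hη : ∀ b, η (Fin.last n) b = 0) :
    Matrix.trace ((iotaSE n C r * ξ)ᵀ * (iotaSE n C r * η)) = Matrix.trace (ξᵀ * η) :=
  congrArg trace (statement14_general r hC (funext hξ) (funext hη))
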